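/- arXiv:2108.03396 — 2 statements merged into one kernel-verified Lean document; each statement's English description precedes it below -/
import Mathlib

section
/- Let m ≥ 2 be an even integer, let F ∈ ℤ[x₁,…,x_m] be a homogeneous cubic form, and let M be a primitive (m/2)×m integer matrix such that F(x) = 0 for every x ∈ ℤ^m with Mx = 0. For c ∈ ℤ^m and n ≥ 1 define the 'multiplicative error' S̃'_c(n) := ∑_{d₀d₁d₂ = n} μ(d₀)·d₀^{1/2}·d₁^{−1/2}·d₂^{−(1+m)/2}·S_c(d₂), the sum being over ordered triples (d₀,d₁,d₂) of positive integers with product n, where μ is the Möbius function. Then for every n ≥ 1: (1/n^{m/2}) · ∑_{v ∈ (ℤ/nℤ)^{m/2}} S̃'_{vM}(n) = 1 if n = 1, and = 0 if n > 1 (where for v ∈ (ℤ/nℤ)^{m/2} one uses any integer lift of vM; the value S̃'_c(n) depends only on c mod n). -/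
/-!
Averaging over `v` detects `M x = 0`: for `d ∣ n`, the sum over `v` mod `n` of the character
`e_d(v · M x)` is `n ^ k` if `M x = 0` in `(ℤ/d)^k` and `0` otherwise (`sum_char_vec`). Since `M`
is primitive, a solution of `M x = 0` mod `d` lifts to an integral one, so that `F x = 0` mod `d`
(`aeval_eq_zero_of_mulVec_eq_zero`), and there are exactly `d ^ k` such `x`
(`card_mulVec_eq_zero`). Hence the average of `S_{vM}(d)` over `v` is `φ(d) d ^ k` (`sum_Sc`).

Consequently the average of `S̃'_{vM}(n)` is
`∑_{d₀ d₁ d₂ = n} μ(d₀) d₀^{1/2} d₁^{-1/2} d₂^{-1/2} φ(d₂)`. By `∑_{d₂ ∣ e} φ(d₂) = e` this equals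
`∑_{d₀ e = n} μ(d₀) d₀^{1/2} e^{1/2} = n^{1/2} ∑_{d₀ ∣ n} μ(d₀)`, which is `1` for `n = 1` and `0`
for `n > 1`.
-/

open scoped BigOperators

/-- `e_n(t) := exp(2πi t/n)` for `t : ZMod n`, using the canonical lift `t.val`. -/
noncomputable def en (n : ℕ) (t : ZMod n) : ℂ :=
  Complex.exp (2 * Real.pi * Complex.I * (t.val : ℂ) / (n : ℂ))

/-- The complete exponential sum `S_c(n)` for a cubic form `F` and `c ∈ ℤ^m`
(reduced mod `n`); junk value `0` at `n = 0`. -/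
noncomputable def Sc {m : ℕ} (F : MvPolynomial (Fin m) ℤ) (c : Fin m → ℤ) (n : ℕ) : ℂ :=
  if h : n = 0 then 0 else
    haveI : NeZero n := ⟨h⟩
    ∑ a : (ZMod n)ˣ, ∑ x : Fin m → ZMod n,
      en n ((a : ZMod n) * MvPolynomial.aeval x F + ∑ i, (c i : ZMod n) * x i)

/-- The "multiplicative error"
`S̃'_c(n) := ∑_{d₀d₁d₂ = n} μ(d₀) d₀^{1/2} d₁^{-1/2} d₂^{-(1+m)/2} S_c(d₂)`. -/
noncomputable def Sc' {m : ℕ} (F : MvPolynomial (Fin m) ℤ) (c : Fin m → ℤ) (n : ℕ) : ℂ :=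
  ∑ d ∈ n.divisorsAntidiagonal, ∑ e ∈ d.2.divisorsAntidiagonal,
    (ArithmeticFunction.moebius d.1 : ℂ) * (Complex.ofReal ((d.1 : ℝ) ^ ((1 : ℝ) / 2))) *
      (Complex.ofReal ((e.1 : ℝ) ^ (-(1 : ℝ) / 2))) * (Complex.ofReal ((e.2 : ℝ) ^ (-((1 : ℝ) + m) / 2))) *
        Sc F c e.2

/-! ### Orthogonality of additive characters -/

lemma en_eq_stdAddChar {d : ℕ} [NeZero d] (t : ZMod d) : en d t = ZMod.stdAddChar t := by
  rw [ZMod.stdAddChar_apply, ZMod.toCircle_apply, en]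

/-- Orthogonality of characters for the additive character of `ZMod d` pulled back to `ZMod n`. -/
lemma sum_char {d n : ℕ} [NeZero d] [NeZero n] (h : d ∣ n) (y : ZMod d) :
    ∑ w : ZMod n, (ZMod.stdAddChar (ZMod.castHom h (ZMod d) w * y) : ℂ)
      = if y = 0 then (n : ℂ) else 0 := by
  classical
  let χ : AddChar (ZMod n) ℂ :=
    (AddChar.mulShift (ZMod.stdAddChar (N := d)) y).compAddMonoidHom
      (ZMod.castHom h (ZMod d)).toAddMonoidHom
  have hχ : ∀ w, χ w = ZMod.stdAddChar (ZMod.castHom h (ZMod d) w * y) := fun w => by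
    simp [χ, AddChar.mulShift_apply, mul_comm]
  have h0 : χ = 0 ↔ y = 0 := by
    constructor
    · intro hc
      have h1 := hχ 1
      rw [hc, AddChar.zero_apply, map_one (ZMod.castHom h (ZMod d)), one_mul] at h1
      apply ZMod.injective_stdAddChar
      rw [← h1, AddChar.map_zero_eq_one]
    · rintro rfl
      ext w
      rw [hχ]
      simp
  simp_rw [← hχ]
  rw [AddChar.sum_eq_ite]
  simp [h0, ZMod.card]

lemma sum_char_vec {k d n : ℕ} [NeZero d] [NeZero n] (h : d ∣ n) (y : Fin k → ZMod d) :
    ∑ v : Fin k → ZMod n, (ZMod.stdAddChar (∑ i, ZMod.castHom h (ZMod d) (v i) * y i) : ℂ)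
      = if y = 0 then (n : ℂ) ^ k else 0 := by
  classical
  have h1 : ∀ v : Fin k → ZMod n,
      (ZMod.stdAddChar (∑ i, ZMod.castHom h (ZMod d) (v i) * y i) : ℂ)
        = ∏ i, (ZMod.stdAddChar (ZMod.castHom h (ZMod d) (v i) * y i) : ℂ) := fun v =>
    map_prod (AddChar.toMonoidHom (ZMod.stdAddChar (N := d)))
      (fun i => Multiplicative.ofAdd (ZMod.castHom h (ZMod d) (v i) * y i)) Finset.univ
  simp_rw [h1]
  rw [← Fintype.piFinset_univ,
    ← Finset.prod_univ_sum (fun _ => Finset.univ)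
      (fun i (w : ZMod n) => (ZMod.stdAddChar (ZMod.castHom h (ZMod d) w * y i) : ℂ))]
  simp_rw [sum_char]
  split_ifs with hy
  · simp [hy]
  · obtain ⟨i, hi⟩ := Function.ne_iff.mp hy
    exact Finset.prod_eq_zero (Finset.mem_univ i) (if_neg hi)

/-! ### Solutions of `M x = 0` modulo `d` -/

/-- The number of vectors of length `2k` whose first `k` coordinates vanish. -/
lemma card_first_half_zero (k d : ℕ) [NeZero d] :
    Fintype.card {y : Fin (2 * k) → ZMod d // ∀ j, j.val < k → y j = 0} = d ^ k := by
  have e : {y : Fin (2 * k) → ZMod d // ∀ j, j.val < k → y j = 0} ≃ (Fin k → ZMod d) :=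
    { toFun := fun y i => y.1 ⟨k + i, by omega⟩
      invFun := fun z => ⟨fun j => if hj : j.val < k then 0 else z ⟨j - k, by omega⟩,
        fun j hj => by simp [hj]⟩
      left_inv := by
        rintro ⟨y, hy⟩
        ext j
        by_cases hj : j.val < k
        · simp [hj, hy j hj]
        · simp only [hj, dite_false]
          congr 1
          exact Fin.ext (show k + (j.val - k) = j.val by omega)
      right_inv := fun z => by
        ext i
        simp }
  rw [Fintype.card_congr e]
  simp [ZMod.card]

section Primitive

variable {k : ℕ} {M : Matrix (Fin k) (Fin (2 * k)) ℤ} {U V : Matrix (Fin (2 * k)) (Fin (2 * k)) ℤ}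

/-- If `M` consists of the first `k` rows of `U`, then `M x` is the first half of `U x`. -/
lemma mulVec_eq_zero_iff {R : Type*} [CommRing R]
    (hUM : ∀ (i : Fin k) (j : Fin (2 * k)), U ⟨i.val, by have := i.isLt; omega⟩ j = M i j)
    (x : Fin (2 * k) → R) :
    (M.map (Int.cast : ℤ → R)).mulVec x = 0 ↔
      ∀ j : Fin (2 * k), j.val < k → (U.map (Int.cast : ℤ → R)).mulVec x j = 0 := by
  constructor
  · intro h j hj
    simpa [Matrix.mulVec, dotProduct, ← hUM] using congrFun h ⟨j, hj⟩
  · intro h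
    ext i
    have := h ⟨i.val, by have := i.isLt; omega⟩ i.isLt
    simpa [Matrix.mulVec, dotProduct, hUM] using this

lemma intCast_map_mul_eq_one {R : Type*} [CommRing R] (h : U * V = 1) :
    U.map (Int.cast : ℤ → R) * V.map (Int.cast : ℤ → R) = 1 := by
  have := congrArg (Int.castRingHom R).mapMatrix h
  rw [map_mul, map_one] at this
  exact this

lemma card_mulVec_eq_zero (hUV : U * V = 1) (hVU : V * U = 1)
    (hUM : ∀ (i : Fin k) (j : Fin (2 * k)), U ⟨i.val, by have := i.isLt; omega⟩ j = M i j)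
    (d : ℕ) [NeZero d] :
    Fintype.card {x : Fin (2 * k) → ZMod d // (M.map (Int.cast : ℤ → ZMod d)).mulVec x = 0}
      = d ^ k := by
  rw [← card_first_half_zero k d]
  let e : (Fin (2 * k) → ZMod d) ≃ (Fin (2 * k) → ZMod d) :=
    { toFun := fun x => (U.map (Int.cast : ℤ → ZMod d)).mulVec x
      invFun := fun x => (V.map (Int.cast : ℤ → ZMod d)).mulVec x
      left_inv := fun x => by
        simp [Matrix.mulVec_mulVec, intCast_map_mul_eq_one hVU]
      right_inv := fun x => by
        simp [Matrix.mulVec_mulVec, intCast_map_mul_eq_one hUV] }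
  exact Fintype.card_congr (e.subtypeEquiv fun x => mulVec_eq_zero_iff hUM x)

/-- A solution of `M x = 0` mod `d` lifts to an integral solution, where `F` vanishes. -/
lemma aeval_eq_zero_of_mulVec_eq_zero (hUV : U * V = 1) (hVU : V * U = 1)
    (hUM : ∀ (i : Fin k) (j : Fin (2 * k)), U ⟨i.val, by have := i.isLt; omega⟩ j = M i j)
    (F : MvPolynomial (Fin (2 * k)) ℤ)
    (hFL : ∀ x : Fin (2 * k) → ℤ,
      (∀ i, (∑ t, M i t * x t) = 0) → MvPolynomial.eval x F = 0)
    {d : ℕ} [NeZero d] (x : Fin (2 * k) → ZMod d)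
    (hx : (M.map (Int.cast : ℤ → ZMod d)).mulVec x = 0) :
    MvPolynomial.aeval x F = 0 := by
  rw [mulVec_eq_zero_iff hUM] at hx
  -- Lift `U x` to an integral vector `Y` with vanishing first half; then `X = U⁻¹ Y` lifts `x`.
  set y := (U.map (Int.cast : ℤ → ZMod d)).mulVec x with hy
  let Y : Fin (2 * k) → ℤ := fun j => if j.val < k then 0 else ((y j).val : ℤ)
  have hY : ∀ j, ((Y j : ℤ) : ZMod d) = y j := by
    intro j
    by_cases hj : j.val < k
    · simp [Y, hj, hx j hj]
    · simp [Y, hj]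
  let X := V.mulVec Y
  have hX : ∀ j, ((X j : ℤ) : ZMod d) = x j := by
    intro j
    have h1 : x = (V.map (Int.cast : ℤ → ZMod d)).mulVec y := by
      simp [hy, Matrix.mulVec_mulVec, intCast_map_mul_eq_one hVU]
    rw [h1]
    simp [X, Matrix.mulVec, dotProduct, hY]
  have hUX : U.mulVec X = Y := by simp [X, Matrix.mulVec_mulVec, hUV]
  have h0 : MvPolynomial.eval X F = 0 := by
    apply hFL
    intro i
    have h2 := congrFun hUX ⟨i.val, by have := i.isLt; omega⟩
    simpa [Matrix.mulVec, dotProduct, hUM, Y] using h2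
  have h3 : MvPolynomial.aeval x F = ((MvPolynomial.eval X F : ℤ) : ZMod d) := by
    have : x = fun j => (Int.castRingHom (ZMod d)) (X j) := by
      ext j
      simp [hX]
    rw [this, ← eq_intCast (Int.castRingHom (ZMod d))]
    exact MvPolynomial.aeval_algebraMap_apply (ZMod d) X F
  rw [h3, h0, Int.cast_zero]

/-! ### The average of `S_{vM}(d)` over `v` -/

lemma sum_Sc (hUV : U * V = 1) (hVU : V * U = 1)
    (hUM : ∀ (i : Fin k) (j : Fin (2 * k)), U ⟨i.val, by have := i.isLt; omega⟩ j = M i j)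
    (F : MvPolynomial (Fin (2 * k)) ℤ)
    (hFL : ∀ x : Fin (2 * k) → ℤ,
      (∀ i, (∑ t, M i t * x t) = 0) → MvPolynomial.eval x F = 0)
    {d n : ℕ} [NeZero d] [NeZero n] (h : d ∣ n) :
    ∑ v : Fin k → ZMod n, Sc F (fun t => ∑ i, ((v i).val : ℤ) * M i t) d
      = (n : ℂ) ^ k * d.totient * (d : ℂ) ^ k := by
  classical
  have hlin : ∀ (v : Fin k → ZMod n) (x : Fin (2 * k) → ZMod d),
      ∑ t, ((∑ i, ((v i).val : ℤ) * M i t : ℤ) : ZMod d) * x t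
        = ∑ i, ZMod.castHom h (ZMod d) (v i) * (M.map (Int.cast : ℤ → ZMod d)).mulVec x i := by
    intro v x
    simp only [Matrix.mulVec, dotProduct, Matrix.map_apply, Int.cast_sum, Int.cast_mul,
      ZMod.natCast_val, ZMod.castHom_apply, Finset.sum_mul, Finset.mul_sum]
    rw [Finset.sum_comm]
    simp [mul_assoc]
  have hSc : ∀ v : Fin k → ZMod n, Sc F (fun t => ∑ i, ((v i).val : ℤ) * M i t) d
      = ∑ a : (ZMod d)ˣ, ∑ x : Fin (2 * k) → ZMod d,
        (ZMod.stdAddChar ((a : ZMod d) * MvPolynomial.aeval x F) : ℂ) *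
          ZMod.stdAddChar (∑ i, ZMod.castHom h (ZMod d) (v i) *
            (M.map (Int.cast : ℤ → ZMod d)).mulVec x i) := by
    intro v
    rw [Sc, dif_neg (NeZero.ne d)]
    refine Finset.sum_congr rfl fun a _ => Finset.sum_congr rfl fun x _ => ?_
    rw [en_eq_stdAddChar, hlin, AddChar.map_add_eq_mul]
  simp_rw [hSc]
  rw [Finset.sum_comm]
  have hinner : ∀ a : (ZMod d)ˣ, ∑ v : Fin k → ZMod n, ∑ x : Fin (2 * k) → ZMod d,
        (ZMod.stdAddChar ((a : ZMod d) * MvPolynomial.aeval x F) : ℂ) *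
          ZMod.stdAddChar (∑ i, ZMod.castHom h (ZMod d) (v i) *
            (M.map (Int.cast : ℤ → ZMod d)).mulVec x i) = (n : ℂ) ^ k * (d : ℂ) ^ k := by
    intro a
    rw [Finset.sum_comm]
    simp_rw [← Finset.mul_sum, sum_char_vec]
    have : ∀ x : Fin (2 * k) → ZMod d,
        (ZMod.stdAddChar ((a : ZMod d) * MvPolynomial.aeval x F) : ℂ) *
          (if (M.map (Int.cast : ℤ → ZMod d)).mulVec x = 0 then (n : ℂ) ^ k else 0)
        = if (M.map (Int.cast : ℤ → ZMod d)).mulVec x = 0 then (n : ℂ) ^ k else 0 := by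
      intro x
      split_ifs with hx
      · rw [aeval_eq_zero_of_mulVec_eq_zero hUV hVU hUM F hFL x hx, mul_zero,
          AddChar.map_zero_eq_one, one_mul]
      · rw [mul_zero]
    simp_rw [this]
    rw [← Finset.sum_filter, Finset.sum_const, ← Fintype.card_subtype,
      card_mulVec_eq_zero hUV hVU hUM d, nsmul_eq_mul, mul_comm]
    push_cast
    rfl
  simp_rw [hinner]
  rw [Finset.sum_const, Finset.card_univ, ZMod.card_units_eq_totient, nsmul_eq_mul]
  ring

end Primitive

/-! ### Divisor sums -/

/-- The weight of `d₂` once the average of `S_{vM}(d₂)` has been inserted. -/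
lemma rpow_weight (k : ℕ) {d : ℕ} (hd : d ≠ 0) :
    ((d : ℝ) ^ (-((1 : ℝ) + (2 * k : ℕ)) / 2)) * (d : ℝ) ^ k = (d : ℝ) ^ (-(1 : ℝ) / 2) := by
  have hd' : (0 : ℝ) < d := by positivity
  rw [← Real.rpow_natCast, ← Real.rpow_add hd']
  congr 1
  push_cast
  ring

/-- The twisted form of `φ * 1 = id`. -/
lemma sum_totient_weight {e : ℕ} (he : e ≠ 0) :
    ∑ p ∈ e.divisorsAntidiagonal,
      (p.1 : ℝ) ^ (-(1 : ℝ) / 2) * (p.2 : ℝ) ^ (-(1 : ℝ) / 2) * p.2.totient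
      = (e : ℝ) ^ ((1 : ℝ) / 2) := by
  have h1 : ∀ p ∈ e.divisorsAntidiagonal,
      (p.1 : ℝ) ^ (-(1 : ℝ) / 2) * (p.2 : ℝ) ^ (-(1 : ℝ) / 2) * p.2.totient
        = (e : ℝ) ^ (-(1 : ℝ) / 2) * (p.2.totient : ℝ) := by
    intro p hp
    rw [← Real.mul_rpow (by positivity) (by positivity), ← Nat.cast_mul,
      (Nat.mem_divisorsAntidiagonal.mp hp).1]
  have he' : (0 : ℝ) < e := by positivity
  rw [Finset.sum_congr rfl h1, ← Finset.mul_sum,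
    Nat.sum_divisorsAntidiagonal' (f := fun _ b => (b.totient : ℝ)), ← Nat.cast_sum,
    Nat.sum_totient, ← Real.rpow_add_one he'.ne']
  norm_num

/-- The twisted form of `μ * 1 = ε`. -/
lemma sum_moebius_weight (n : ℕ) :
    ∑ p ∈ n.divisorsAntidiagonal,
      (ArithmeticFunction.moebius p.1 : ℝ) * (p.1 : ℝ) ^ ((1 : ℝ) / 2) * (p.2 : ℝ) ^ ((1 : ℝ) / 2)
      = if n = 1 then 1 else 0 := by
  have h1 : ∀ p ∈ n.divisorsAntidiagonal,
      (ArithmeticFunction.moebius p.1 : ℝ) * (p.1 : ℝ) ^ ((1 : ℝ) / 2) * (p.2 : ℝ) ^ ((1 : ℝ) / 2)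
        = (n : ℝ) ^ ((1 : ℝ) / 2) * ((ArithmeticFunction.moebius p.1 : ℤ) : ℝ) := by
    intro p hp
    rw [mul_assoc, ← Real.mul_rpow (by positivity) (by positivity), ← Nat.cast_mul,
      (Nat.mem_divisorsAntidiagonal.mp hp).1, mul_comm]
  rw [Finset.sum_congr rfl h1, ← Finset.mul_sum,
    Nat.sum_divisorsAntidiagonal (f := fun a _ => ((ArithmeticFunction.moebius a : ℤ) : ℝ)),
    ← Int.cast_sum, ← ArithmeticFunction.coe_mul_zeta_apply,
    ArithmeticFunction.moebius_mul_coe_zeta, ArithmeticFunction.one_apply]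
  split_ifs with h
  · simp [h]
  · simp

theorem stmt2 (k : ℕ) (hk : 1 ≤ k) (F : MvPolynomial (Fin (2 * k)) ℤ)
    (hF : F.IsHomogeneous 3)
    (M : Matrix (Fin k) (Fin (2 * k)) ℤ)
    (hM : ∃ U : Matrix (Fin (2 * k)) (Fin (2 * k)) ℤ,
      (U.det = 1 ∨ U.det = -1) ∧
      ∀ (i : Fin k) (j : Fin (2 * k)), U ⟨i.val, by have := i.isLt; omega⟩ j = M i j)
    (hFL : ∀ x : Fin (2 * k) → ℤ,
      (∀ i, (∑ t, M i t * x t) = 0) → MvPolynomial.eval x F = 0)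
    (n : ℕ) [NeZero n] :
    (1 / (n : ℂ) ^ k) *
      ∑ v : Fin k → ZMod n, Sc' F (fun t => ∑ i, ((v i).val : ℤ) * M i t) n
    = if n = 1 then 1 else 0 := by
  obtain ⟨U, hdet, hUM⟩ := hM
  have hunit : IsUnit U.det := Int.isUnit_iff.mpr hdet
  have hUV : U * U⁻¹ = 1 := Matrix.mul_nonsing_inv U hunit
  have hVU : U⁻¹ * U = 1 := Matrix.nonsing_inv_mul U hunit
  have hn : n ≠ 0 := NeZero.ne n
  have hnk : (n : ℂ) ^ k ≠ 0 := pow_ne_zero _ (Nat.cast_ne_zero.mpr hn)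
  have key : ∑ v : Fin k → ZMod n, Sc' F (fun t => ∑ i, ((v i).val : ℤ) * M i t) n
      = (n : ℂ) ^ k * ((∑ d ∈ n.divisorsAntidiagonal,
          (ArithmeticFunction.moebius d.1 : ℝ) * (d.1 : ℝ) ^ ((1 : ℝ) / 2) *
            (d.2 : ℝ) ^ ((1 : ℝ) / 2) : ℝ) : ℂ) := by
    unfold Sc'
    rw [Finset.sum_comm, Complex.ofReal_sum, Finset.mul_sum]
    refine Finset.sum_congr rfl fun d hd => ?_
    obtain ⟨hdn, -⟩ := Nat.mem_divisorsAntidiagonal.mp hd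
    have hd2 : d.2 ≠ 0 := by
      rintro h
      exact hn (by rw [← hdn, h, mul_zero])
    rw [Finset.sum_comm, ← sum_totient_weight hd2, Finset.mul_sum, Complex.ofReal_sum,
      Finset.mul_sum]
    refine Finset.sum_congr rfl fun e he => ?_
    obtain ⟨hed, -⟩ := Nat.mem_divisorsAntidiagonal.mp he
    have he2 : e.2 ≠ 0 := by
      rintro h
      exact hd2 (by rw [← hed, h, mul_zero])
    have : NeZero e.2 := ⟨he2⟩
    have hdvd : e.2 ∣ n := (Dvd.intro_left _ hed).trans (Dvd.intro_left _ hdn)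
    rw [← Finset.mul_sum, sum_Sc hUV hVU hUM F hFL hdvd, ← rpow_weight k he2]
    simp only [Complex.ofReal_mul, Complex.ofReal_pow, Complex.ofReal_natCast,
      Complex.ofReal_intCast]
    ring
  rw [key, sum_moebius_weight n, ← mul_assoc, one_div, inv_mul_cancel₀ hnk, one_mul]
  split_ifs <;> simp
end

section
/- Let F ∈ ℤ[x₁,…,x_m] be a homogeneous cubic form, p a prime, and c ∈ ℤ^m with at least one coordinate of c not divisible by p. For an integer j ≥ 1 let B(j) denote the set of x ∈ (ℤ/p^jℤ)^m such that F(x) ≡ 0 (mod p^j), c·x ≡ 0 (mod p^j), the gradient ∇F(x) is not ≡ 0 (mod p), and ∇F(x) ≡ λ·c (mod p) for some λ ∈ 𝔽_p. Then for every integer l ≥ 2: φ(p^l)·S_c(p^l) = p^{2l}·|B(l)| − p^{2l+m−2}·|B(l−1)|, where φ is Euler's totient function. -/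
/-!
Write `q = p^l = p^(k+1)` and `R(t) = ∑_u e_q(u t)`, the sum over units `u` (a Ramanujan sum).

Since `F` is a cubic form, replacing `x` by `b x` for a unit `b` shows that
`φ(q) S_c(q) = ∑_x R(F(x)) R(c · x)` (`totient_mul_Sc`). Everything else comes from averaging over
the translates `x + p^k y`, along which `F` is affine linear in `y` because `p^k * p^k = 0` in
`ℤ/q` (this needs `l ≥ 2`), and along which `x` mod `p` is constant.

* If `∇F(x)` is zero or not proportional to `c` mod `p`, the average of `R(F) R(c · )` is zero
  (`sum_bad_shift`).
* Otherwise both `∇F(x)` and `c` are nonzero mod `p`, so the averages of `R(F)` and of `R(c · )`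
  are zero (`sum_ram_shift`). Inserting `R(t) = q [t = 0] - p^k [p^k ∣ t]` (`ram_eq`), what survives
  is `q^2` times the number of these points with `F = c · x = 0`, minus `p^(2k)` times the number
  of those at which both vanish mod `p^k` (`totient_mul_Sc_eq`).

The latter number is `p^m |B(k)|`, as the fibres of reduction mod `p^k` have `p^m` elements
(`card_fibre`).
-/

open scoped BigOperators

set_option linter.unusedSectionVars false

namespace CubicSum

open MvPolynomial

/-! ### Polynomials over rings with a square-zero element -/

/-- First-order Taylor expansion of a polynomial along an increment of square zero. -/
theorem aeval_add_smul {m : ℕ} {R : Type*} [CommRing R] (F : MvPolynomial (Fin m) ℤ)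
    (x y : Fin m → R) (e : R) (he : e * e = 0) :
    aeval (x + e • y) F = aeval x F + e * ∑ i, aeval x (pderiv i F) * y i := by
  induction F using MvPolynomial.induction_on with
  | C a => simp
  | add f g hf hg =>
    simp only [map_add, hf, hg, add_mul, Finset.sum_add_distrib]
    ring
  | mul_X f j hf =>
    have h : ∀ i, aeval x (pderiv i (f * X j)) * y i
        = x j * (aeval x (pderiv i f) * y i) + if i = j then aeval x f * y i else 0 := by
      intro i
      rw [Derivation.leibniz, pderiv_X]
      by_cases hij : i = j
      · subst hij; simp; ring
      · simp [hij]; ring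
    simp only [h, Finset.sum_add_distrib, ← Finset.mul_sum, Finset.sum_ite_eq', Finset.mem_univ,
      if_true, map_mul, aeval_X, hf, Pi.add_apply, Pi.smul_apply, smul_eq_mul]
    linear_combination (∑ i, aeval x (pderiv i f) * y i) * y j * he

theorem aeval_smul_of_isHomogeneous {m n : ℕ} {R : Type*} [CommRing R]
    {F : MvPolynomial (Fin m) ℤ} (hF : F.IsHomogeneous n) (x : Fin m → R) (b : R) :
    aeval (b • x) F = b ^ n * aeval x F := by
  rw [aeval_def, aeval_def, eval₂_eq', eval₂_eq', Finset.mul_sum]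
  refine Finset.sum_congr rfl fun d hd => ?_
  have h : ∑ i, d i = n := by
    have := hF (mem_support_iff.mp hd)
    rw [← this, Finsupp.weight_apply, Finsupp.sum_fintype _ _ (by simp)]
    simp
  simp only [Pi.smul_apply, smul_eq_mul, mul_pow, Finset.prod_mul_distrib, Finset.prod_pow_eq_pow_sum, h]
  ring

theorem aeval_comp_ringHom {m : ℕ} {R S : Type*} [CommRing R] [CommRing S] (f : R →+* S)
    (x : Fin m → R) (G : MvPolynomial (Fin m) ℤ) :
    aeval (fun i => f (x i)) G = f (aeval x G) :=
  (comp_aeval_apply (φ := f.toIntAlgHom) x G).symm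

/-! ### Arithmetic in `ℤ/p^(k+1)` -/

/-- Reduction `ℤ/p^(k+1) → 𝔽_p`. -/
noncomputable def red (p k : ℕ) : ZMod (p ^ (k + 1)) →+* ZMod p :=
  ZMod.castHom (dvd_pow_self p k.succ_ne_zero) _

section
variable {p k : ℕ} [hp : Fact p.Prime]

theorem red_eq_zero_iff (v : ZMod (p ^ (k + 1))) :
    red p k v = 0 ↔ (p : ZMod (p ^ (k + 1))) ^ k * v = 0 := by
  obtain ⟨n, rfl⟩ := ZMod.natCast_zmod_surjective v
  rw [map_natCast, ZMod.natCast_eq_zero_iff]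
  rw [← Nat.cast_pow, ← Nat.cast_mul, ZMod.natCast_eq_zero_iff, pow_succ,
    Nat.mul_dvd_mul_iff_left (pow_pos hp.out.pos k)]

theorem castHom_eq_zero_iff (h : p ^ k ∣ p ^ (k + 1)) (v : ZMod (p ^ (k + 1))) :
    ZMod.castHom h (ZMod (p ^ k)) v = 0 ↔ (p : ZMod (p ^ (k + 1))) * v = 0 := by
  obtain ⟨n, rfl⟩ := ZMod.natCast_zmod_surjective v
  rw [map_natCast, ZMod.natCast_eq_zero_iff]
  rw [← Nat.cast_mul, ZMod.natCast_eq_zero_iff, pow_succ',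
    Nat.mul_dvd_mul_iff_left hp.out.pos]

theorem isUnit_iff_red (v : ZMod (p ^ (k + 1))) : IsUnit v ↔ red p k v ≠ 0 := by
  obtain ⟨n, rfl⟩ := ZMod.natCast_zmod_surjective v
  rw [map_natCast, Ne, ZMod.natCast_eq_zero_iff, ZMod.isUnit_iff_coprime,
    Nat.coprime_pow_right_iff k.succ_pos, Nat.coprime_comm, hp.out.coprime_iff_not_dvd]

theorem exists_of_red_eq_zero {v : ZMod (p ^ (k + 1))} (h : red p k v = 0) :
    ∃ b, v = p * b := by
  obtain ⟨n, rfl⟩ := ZMod.natCast_zmod_surjective v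
  rw [map_natCast, ZMod.natCast_eq_zero_iff] at h
  obtain ⟨b, rfl⟩ := h
  exact ⟨b, by push_cast; rfl⟩

theorem p_mul_pow : (p : ZMod (p ^ (k + 1))) * (p : ZMod (p ^ (k + 1))) ^ k = 0 := by
  rw [← pow_succ', ← Nat.cast_pow, ZMod.natCast_self]

/-! ### Character sums and Ramanujan sums -/

theorem sum_eq_zero_of_shift {G : Type*} [AddGroup G] [Fintype G] (f : G → ℂ) (g : G) (z : ℂ)
    (hz : z ≠ 1) (h : ∀ x, f (x + g) = z * f x) : ∑ x, f x = 0 := by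
  have h1 : ∑ x, f x = z * ∑ x, f x := by
    rw [Finset.mul_sum, ← Finset.sum_congr rfl fun x _ => h x]
    exact (Equiv.sum_comp (Equiv.addRight g) f).symm
  have h2 : (1 - z) * ∑ x, f x = 0 := by linear_combination h1
  exact (mul_eq_zero.mp h2).resolve_left (sub_ne_zero.mpr hz.symm)

/-- The standard additive character `t ↦ exp (2πi t / p ^ (k + 1))`. -/
noncomputable abbrev chi (p k : ℕ) [Fact p.Prime] : AddChar (ZMod (p ^ (k + 1))) ℂ :=
  ZMod.stdAddChar

theorem chi_ne_one {t : ZMod (p ^ (k + 1))} (h : t ≠ 0) : chi p k t ≠ 1 := by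
  intro h1
  exact h (ZMod.injective_stdAddChar (h1.trans (AddChar.map_zero_eq_one _).symm))

/-- The character sum over a full residue box vanishes when the linear form `v` is nonzero mod `p`:
shifting one coordinate `y i` by `1` multiplies the sum by a nontrivial `p`-th root of unity. -/
theorem sum_chi_eq_zero {m : ℕ} (t : ZMod (p ^ (k + 1))) (v : Fin m → ZMod (p ^ (k + 1)))
    (hv : ∃ i, red p k (v i) ≠ 0) :
    ∑ y : Fin m → ZMod (p ^ (k + 1)), chi p k (t + (p : ZMod (p ^ (k + 1))) ^ k * ∑ i, v i * y i)
      = 0 := by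
  obtain ⟨i, hi⟩ := hv
  rw [Ne, red_eq_zero_iff] at hi
  refine sum_eq_zero_of_shift _ (Pi.single i 1) _ (chi_ne_one hi) fun y => ?_
  rw [← AddChar.map_add_eq_mul]
  congr 1
  simp [mul_add, Finset.sum_add_distrib, Pi.single_apply]
  ring

/-- The Ramanujan sum of modulus `p ^ (k + 1)`. -/
noncomputable def ram (p k : ℕ) [Fact p.Prime] (t : ZMod (p ^ (k + 1))) : ℂ :=
  ∑ u : (ZMod (p ^ (k + 1)))ˣ, chi p k (u * t)

/-- The indicator function of `{0}`, with complex values. -/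
noncomputable def ind {R : Type*} [Zero R] (t : R) : ℂ := by classical exact if t = 0 then 1 else 0

theorem sum_units_eq {R : Type*} [CommRing R] [Fintype R] [DecidableEq R] (g : R → ℂ) :
    ∑ u : Rˣ, g u = ∑ a, g a - ∑ a, open Classical in if IsUnit a then 0 else g a := by
  classical
  rw [← Finset.sum_sub_distrib]
  have : ∀ a, (g a - if IsUnit a then 0 else g a) = if IsUnit a then g a else 0 := by
    intro a; split_ifs <;> simp
  simp only [this]
  rw [← Finset.sum_filter]
  refine Finset.sum_bij (fun u _ => (u : R)) ?_ ?_ ?_ ?_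
  · intro u _; simp
  · intro u _ v _ h; exact Units.ext h
  · intro a ha
    obtain ⟨u, rfl⟩ := (Finset.mem_filter.mp ha).2
    exact ⟨u, Finset.mem_univ _, rfl⟩
  · intro u _; rfl

theorem card_nonunits : ∑ a : ZMod (p ^ (k + 1)), (open Classical in if IsUnit a then 0 else (1 : ℂ))
    = (p : ℂ) ^ k := by
  have h := sum_units_eq (R := ZMod (p ^ (k + 1))) fun _ => 1
  simp only [Finset.sum_const, Finset.card_univ, ZMod.card, ZMod.card_units_eq_totient,
    Nat.totient_prime_pow_succ hp.out, nsmul_eq_mul, mul_one] at h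
  push_cast [Nat.cast_sub hp.out.one_le] at h
  linear_combination h

/-- The complete sum of `chi p k (a * t)` restricted to the nonunits `a`, i.e. to the multiples of `p`.
It is a sum over a subgroup, hence zero unless the character is trivial there. -/
theorem sum_nonunits (t : ZMod (p ^ (k + 1))) :
    ∑ a : ZMod (p ^ (k + 1)), (open Classical in if IsUnit a then 0 else chi p k (a * t))
      = (p : ℂ) ^ k * ind ((p : ZMod (p ^ (k + 1))) * t) := by
  by_cases ht : (p : ZMod (p ^ (k + 1))) * t = 0
  · rw [ind, if_pos ht, mul_one, ← card_nonunits]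
    refine Finset.sum_congr rfl fun a _ => ?_
    split_ifs with ha
    · rfl
    · rw [isUnit_iff_red, not_not] at ha
      obtain ⟨b, rfl⟩ := exists_of_red_eq_zero ha
      rw [mul_comm _ b, mul_assoc, ht, mul_zero, AddChar.map_zero_eq_one]
  · rw [ind, if_neg ht, mul_zero]
    refine sum_eq_zero_of_shift _ (p : ZMod (p ^ (k + 1))) _ (chi_ne_one ht) fun a => ?_
    have hu : IsUnit (a + p) ↔ IsUnit a := by
      rw [isUnit_iff_red, isUnit_iff_red, map_add, map_natCast, ZMod.natCast_self, add_zero]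
    simp only [hu]
    split_ifs
    · rw [mul_zero]
    · rw [← AddChar.map_add_eq_mul]
      congr 1; ring

theorem ite_ind_mul_ind {R S : Type*} [Zero R] [Zero S] (t : R) (s : S) (G : Prop) [Decidable G]
    [Decidable (t = 0 ∧ s = 0 ∧ G)] :
    (if G then ind t * ind s else 0) = if t = 0 ∧ s = 0 ∧ G then (1 : ℂ) else 0 := by
  unfold ind
  split_ifs <;> simp_all

/-- Evaluation of the Ramanujan sum; `p * t = 0` in `ℤ/p^(k+1)` says that `p^k` divides `t`. -/
theorem ram_eq (t : ZMod (p ^ (k + 1))) :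
    ram p k t = (p : ℂ) ^ (k + 1) * ind t - (p : ℂ) ^ k * ind ((p : ZMod (p ^ (k + 1))) * t) := by
  classical
  have hall : ∑ a, chi p k (a * t) = (p : ℂ) ^ (k + 1) * ind t := by
    rw [AddChar.sum_mulShift t (ZMod.isPrimitive_stdAddChar (p ^ (k + 1))), ind]
    split_ifs <;> simp [ZMod.card]
  rw [ram, sum_units_eq fun a => chi p k (a * t), sum_nonunits, hall]
end

section
variable {p k m : ℕ} [hp : Fact p.Prime]

/-! ### Averaging over the translates `x + p^k y` -/

/-- A sum vanishes as soon as all its averages over the translates by `p^k • y` vanish. -/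
theorem sum_eq_zero_of_avg (h : (Fin m → ZMod (p ^ (k + 1))) → ℂ)
    (hz : ∀ x, ∑ y, h (x + (p : ZMod (p ^ (k + 1))) ^ k • y) = 0) : ∑ x, h x = 0 := by
  have h1 : ∑ y : Fin m → ZMod (p ^ (k + 1)), ∑ x, h (x + (p : ZMod (p ^ (k + 1))) ^ k • y) = 0 := by
    rw [Finset.sum_comm]
    exact Finset.sum_eq_zero fun x _ => hz x
  have h2 : ∀ y : Fin m → ZMod (p ^ (k + 1)),
      ∑ x, h (x + (p : ZMod (p ^ (k + 1))) ^ k • y) = ∑ x, h x := fun y =>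
    Equiv.sum_comp (Equiv.addRight ((p : ZMod (p ^ (k + 1))) ^ k • y)) h
  simp only [h2, Finset.sum_const, nsmul_eq_mul] at h1
  refine (mul_eq_zero.mp h1).resolve_left ?_
  exact_mod_cast (Finset.card_pos.mpr Finset.univ_nonempty).ne'

/-- The linear form `c · x`, over any commutative ring. -/
def lin {R : Type*} [CommRing R] (c : Fin m → ℤ) (x : Fin m → R) : R := ∑ i, (c i : R) * x i

theorem lin_add_smul {R : Type*} [CommRing R] (c : Fin m → ℤ) (x y : Fin m → R) (e : R) :
    lin c (x + e • y) = lin c x + e * ∑ i, (c i : R) * y i := by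
  simp only [lin, Pi.add_apply, Pi.smul_apply, smul_eq_mul, mul_add, Finset.sum_add_distrib,
    Finset.mul_sum]
  congr 1
  exact Finset.sum_congr rfl fun i _ => by ring

/-- The condition on a point `x` mod `p` defining `B`: the gradient of `F` at `x` is nonzero and
proportional to `c`. -/
def Good (F : MvPolynomial (Fin m) ℤ) (c : Fin m → ℤ) (x : Fin m → ZMod p) : Prop :=
  (¬ ∀ i, aeval x (pderiv i F) = 0) ∧ ∃ lam : ZMod p, ∀ i, aeval x (pderiv i F) = lam * (c i : ZMod p)

theorem pow_mul_self (hk : 1 ≤ k) :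
    (p : ZMod (p ^ (k + 1))) ^ k * (p : ZMod (p ^ (k + 1))) ^ k = 0 := by
  obtain ⟨j, rfl⟩ := Nat.exists_eq_add_of_le' hk
  rw [pow_succ (_ : ZMod _) j, mul_assoc, ← pow_succ (_ : ZMod _) j, p_mul_pow, mul_zero]

theorem red_shift (hk : 1 ≤ k) (x y : Fin m → ZMod (p ^ (k + 1))) :
    (fun i => red p k ((x + (p : ZMod (p ^ (k + 1))) ^ k • y) i)) = fun i => red p k (x i) := by
  funext i
  simp [zero_pow (Nat.one_le_iff_ne_zero.mp hk)]

theorem ind_p_shift (t s : ZMod (p ^ (k + 1))) :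
    ind ((p : ZMod (p ^ (k + 1))) * (t + (p : ZMod (p ^ (k + 1))) ^ k * s))
      = ind ((p : ZMod (p ^ (k + 1))) * t) := by
  rw [mul_add, ← mul_assoc, p_mul_pow, zero_mul, add_zero]

theorem sum_ram_shift (t : ZMod (p ^ (k + 1))) (v : Fin m → ZMod (p ^ (k + 1)))
    (hv : ∃ i, red p k (v i) ≠ 0) :
    ∑ y : Fin m → ZMod (p ^ (k + 1)), ram p k (t + (p : ZMod (p ^ (k + 1))) ^ k * ∑ i, v i * y i)
      = 0 := by
  simp only [ram]
  rw [Finset.sum_comm]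
  refine Finset.sum_eq_zero fun u _ => ?_
  obtain ⟨i, hi⟩ := hv
  rw [← sum_chi_eq_zero ((u : ZMod (p ^ (k + 1))) * t) (fun i => u * v i)
    ⟨i, by rw [map_mul]; exact mul_ne_zero ((isUnit_iff_red _).mp u.isUnit) hi⟩]
  refine Finset.sum_congr rfl fun y _ => ?_
  congr 1
  simp only [mul_assoc, ← Finset.mul_sum]
  ring

/-- Points at which the gradient is zero or not proportional to `c` contribute nothing: for units
`a`, `b` the vector `a ∇F(x) + b c` is nonzero mod `p`, so the average over `x + p^k y` is zero. -/
theorem sum_bad_shift (hk : 1 ≤ k) (F : MvPolynomial (Fin m) ℤ) (c : Fin m → ℤ)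
    (hc : ∃ i, (c i : ZMod p) ≠ 0) (x : Fin m → ZMod (p ^ (k + 1)))
    (hx : ¬ Good F c fun i => red p k (x i)) :
    ∑ y : Fin m → ZMod (p ^ (k + 1)), ram p k (aeval (x + (p : ZMod (p ^ (k + 1))) ^ k • y) F) *
      ram p k (lin c (x + (p : ZMod (p ^ (k + 1))) ^ k • y)) = 0 := by
  simp only [ram, Finset.sum_mul_sum]
  rw [Finset.sum_comm]
  refine Finset.sum_eq_zero fun a _ => ?_
  rw [Finset.sum_comm]
  refine Finset.sum_eq_zero fun b _ => ?_
  have ha : red p k a ≠ 0 := (isUnit_iff_red _).mp a.isUnit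
  have hb : red p k b ≠ 0 := (isUnit_iff_red _).mp b.isUnit
  have hv : ∃ i, red p k (a * aeval x (pderiv i F) + b * c i) ≠ 0 := by
    by_contra! hv
    simp only [map_add, map_mul, map_intCast, ← aeval_comp_ringHom] at hv
    apply hx
    constructor
    · intro h0
      obtain ⟨i, hi⟩ := hc
      have := hv i
      rw [h0 i, mul_zero, zero_add] at this
      exact mul_ne_zero hb hi this
    · refine ⟨-(red p k b / red p k a), fun i => ?_⟩
      field_simp
      linear_combination hv i
  rw [← sum_chi_eq_zero ((a : ZMod (p ^ (k + 1))) * aeval x F + (b : ZMod (p ^ (k + 1))) * lin c x) _ hv]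
  refine Finset.sum_congr rfl fun y _ => ?_
  rw [← AddChar.map_add_eq_mul, aeval_add_smul F x y _ (pow_mul_self hk), lin_add_smul]
  congr 1
  simp only [add_mul, Finset.sum_add_distrib, mul_assoc, ← Finset.mul_sum]
  ring

/-! ### From the exponential sum to point counts -/

/-- By homogeneity, substituting `b • x` for `x` and absorbing `b^3` into `a` turns `c · x` into
`b (c · x)` for any unit `b`; averaging over `b` splits the sum into two Ramanujan sums. -/
theorem totient_mul_Sc {F : MvPolynomial (Fin m) ℤ} (hF : F.IsHomogeneous 3) (c : Fin m → ℤ) :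
    (Nat.totient (p ^ (k + 1)) : ℂ) * Sc F c (p ^ (k + 1))
      = ∑ x : Fin m → ZMod (p ^ (k + 1)), ram p k (aeval x F) * ram p k (lin c x) := by
  have hS : Sc F c (p ^ (k + 1)) = ∑ a : (ZMod (p ^ (k + 1)))ˣ, ∑ x : Fin m → ZMod (p ^ (k + 1)),
      chi p k (a * aeval x F + lin c x) := by
    rw [Sc, dif_neg (NeZero.ne _)]
    refine Finset.sum_congr rfl fun a _ => Finset.sum_congr rfl fun x _ => ?_
    rw [en, chi, ZMod.stdAddChar_apply, ZMod.toCircle_apply, lin]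
  have hb : ∀ b : (ZMod (p ^ (k + 1)))ˣ, Sc F c (p ^ (k + 1)) =
      ∑ a : (ZMod (p ^ (k + 1)))ˣ, ∑ x : Fin m → ZMod (p ^ (k + 1)),
      chi p k (a * aeval x F + b * lin c x) := by
    intro b
    rw [hS, ← Equiv.sum_comp (Equiv.mulRight (b ^ 3))
      (fun a => ∑ x : Fin m → ZMod (p ^ (k + 1)), chi p k (a * aeval x F + b * lin c x))]
    refine Finset.sum_congr rfl fun a _ => ?_
    rw [← Equiv.sum_comp (MulAction.toPerm b : Equiv.Perm (Fin m → ZMod (p ^ (k + 1))))]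
    refine Finset.sum_congr rfl fun x _ => ?_
    have h1 : (MulAction.toPerm b : Equiv.Perm (Fin m → ZMod (p ^ (k + 1)))) x
      = (b : ZMod (p ^ (k + 1))) • x := rfl
    have h2 : lin c ((b : ZMod (p ^ (k + 1))) • x) = b * lin c x := by
      simp only [lin, Finset.mul_sum, Pi.smul_apply, smul_eq_mul]
      exact Finset.sum_congr rfl fun i _ => by ring
    rw [h1, h2, aeval_smul_of_isHomogeneous hF, Equiv.coe_mulRight]
    push_cast
    rw [mul_assoc]
  have hcard : (Nat.totient (p ^ (k + 1)) : ℂ) * Sc F c (p ^ (k + 1))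
      = ∑ _b : (ZMod (p ^ (k + 1)))ˣ, Sc F c (p ^ (k + 1)) := by
    rw [Finset.sum_const, Finset.card_univ, ZMod.card_units_eq_totient, nsmul_eq_mul]
  rw [hcard, Finset.sum_congr rfl fun b _ => hb b]
  simp only [ram, Finset.sum_mul_sum, ← AddChar.map_add_eq_mul]
  rw [Finset.sum_congr rfl fun b _ => Finset.sum_comm, Finset.sum_comm]
  exact Finset.sum_congr rfl fun x _ => Finset.sum_comm

/-- A sum of a combination in which three of the summands have total zero. -/
theorem sum_combine {ι : Type*} [Fintype ι] (W A B f₀ f₁ f₂ : ι → ℂ) (a b r : ℂ)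
    (h₀ : ∑ x, f₀ x = 0) (h₁ : ∑ x, f₁ x = 0) (h₂ : ∑ x, f₂ x = 0)
    (h : ∀ x, W x = a * A x - b * B x + f₀ x + r * f₁ x + r * f₂ x) :
    ∑ x, W x = a * ∑ x, A x - b * ∑ x, B x := by
  simp only [h, Finset.sum_add_distrib, Finset.sum_sub_distrib, ← Finset.mul_sum, h₀, h₁, h₂]
  ring

open Classical in
/-- The exponential sum in terms of point counts over the points satisfying `Good`. The mixed terms
disappear since `ram p k (aeval x F)` and `ram p k (lin c x)` each average to zero over
`x + p^k y` at such points. -/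
theorem totient_mul_Sc_eq (hk : 1 ≤ k) {F : MvPolynomial (Fin m) ℤ} (hF : F.IsHomogeneous 3)
    (c : Fin m → ℤ) (hc : ∃ i, (c i : ZMod p) ≠ 0) :
    (Nat.totient (p ^ (k + 1)) : ℂ) * Sc F c (p ^ (k + 1)) =
      (p : ℂ) ^ (2 * (k + 1)) * (∑ x : Fin m → ZMod (p ^ (k + 1)),
        if Good F c (fun i => red p k (x i)) then ind (aeval x F) * ind (lin c x) else 0)
      - (p : ℂ) ^ (2 * k) * (∑ x : Fin m → ZMod (p ^ (k + 1)),
        if Good F c (fun i => red p k (x i)) then ind ((p : ZMod (p ^ (k + 1))) * aeval x F) *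
          ind ((p : ZMod (p ^ (k + 1))) * lin c x) else 0) := by
  rw [totient_mul_Sc hF]
  have hbad : ∑ x : Fin m → ZMod (p ^ (k + 1)), (if Good F c (fun i => red p k (x i)) then 0
      else ram p k (aeval x F) * ram p k (lin c x)) = 0 := by
    refine sum_eq_zero_of_avg _ fun x => ?_
    simp only [red_shift hk]
    split_ifs with h
    · simp
    · exact sum_bad_shift hk F c hc x h
  have h1 : ∑ x : Fin m → ZMod (p ^ (k + 1)), (if Good F c (fun i => red p k (x i)) then
      ram p k (aeval x F) * ind ((p : ZMod (p ^ (k + 1))) * lin c x) else 0) = 0 := by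
    refine sum_eq_zero_of_avg _ fun x => ?_
    simp only [red_shift hk]
    split_ifs with h
    · simp only [lin_add_smul, ind_p_shift, ← Finset.sum_mul,
        aeval_add_smul F x _ _ (pow_mul_self hk)]
      rw [sum_ram_shift, zero_mul]
      simpa [aeval_comp_ringHom] using h.1
    · simp
  have h2 : ∑ x : Fin m → ZMod (p ^ (k + 1)), (if Good F c (fun i => red p k (x i)) then
      ind ((p : ZMod (p ^ (k + 1))) * aeval x F) * ram p k (lin c x) else 0) = 0 := by
    refine sum_eq_zero_of_avg _ fun x => ?_
    simp only [red_shift hk]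
    split_ifs with h
    · simp only [lin_add_smul, aeval_add_smul F x _ _ (pow_mul_self hk), ind_p_shift,
        ← Finset.mul_sum]
      rw [sum_ram_shift, mul_zero]
      simpa using hc
    · simp
  -- With `R(t) = A - D` and `R(s) = C - E`, one has `R(t) R(s) = A C - D E - R(t) E - D R(s)`.
  refine sum_combine _ _ _ _ _ _ _ _ (-(p : ℂ) ^ k) hbad h1 h2 fun x => ?_
  split_ifs
  · rw [ram_eq, ram_eq]; ring
  · ring

open Classical in
/-- Every fibre of `(ℤ/p^(k+1))^m → (ℤ/p^k)^m` has `p^m` elements, so pulling back a condition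
multiplies the number of solutions by `p^m`. -/
theorem card_fibre (P : (Fin m → ZMod (p ^ k)) → Prop) :
    (∑ x : Fin m → ZMod (p ^ (k + 1)), if P (fun i => ZMod.castHom
      (pow_dvd_pow p k.le_succ) (ZMod (p ^ k)) (x i)) then (1 : ℂ) else 0)
      = (p : ℂ) ^ m * Nat.card {z | P z} := by
  set π : (Fin m → ZMod (p ^ (k + 1))) →+ (Fin m → ZMod (p ^ k)) :=
    AddMonoidHom.compLeft (ZMod.castHom (pow_dvd_pow p k.le_succ) (ZMod (p ^ k))).toAddMonoidHom
      (Fin m) with hπ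
  have hsurj : Function.Surjective π :=
    Function.Surjective.comp_left (ZMod.castHom_surjective (pow_dvd_pow p k.le_succ))
  have hsum : ∀ g : (Fin m → ZMod (p ^ k)) → ℂ, ∑ x, g (π x)
      = (Finset.univ.filter fun x => π x = 0).card * ∑ z, g z := by
    intro g
    rw [← Finset.sum_fiberwise (s := Finset.univ) (g := π), Finset.mul_sum]
    refine Finset.sum_congr rfl fun z _ => ?_
    rw [Finset.sum_congr rfl (g := fun _ => g z)
      (fun x hx => by rw [(Finset.mem_filter.mp hx).2]), Finset.sum_const, nsmul_eq_mul]
    congr 2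
    exact AddMonoidHom.card_fiber_eq_of_mem_range π (hsurj z) (hsurj 0)
  have hone := hsum fun _ => 1
  simp only [Finset.sum_const, Finset.card_univ, Fintype.card_fun, ZMod.card, Fintype.card_fin,
    nsmul_eq_mul, mul_one] at hone
  have hp0 : (p : ℂ) ≠ 0 := by exact_mod_cast hp.out.ne_zero
  have hK : ((Finset.univ.filter fun x => π x = 0).card : ℂ) = (p : ℂ) ^ m := by
    push_cast at hone
    refine mul_right_cancel₀ (pow_ne_zero m (pow_ne_zero k hp0)) ?_
    rw [← hone, pow_succ, mul_pow, mul_comm]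
  have := hsum fun z => if P z then 1 else 0
  rw [hK] at this
  have hcard : Nat.card {z | P z} = (Finset.univ.filter P).card := by
    rw [← Fintype.card_subtype, ← Nat.card_eq_fintype_card]
    rfl
  rw [hcard, ← Finset.sum_boole]
  exact this

end
end CubicSum

open CubicSum in
theorem stmt5 (m : ℕ) (F : MvPolynomial (Fin m) ℤ) (hF : F.IsHomogeneous 3)
    (p : ℕ) (hp : p.Prime) (c : Fin m → ℤ) (hc : ∃ i, ¬ (p : ℤ) ∣ c i)
    (B : ℕ → ℕ)
    (hB : ∀ j : ℕ, B j = Nat.card {x : Fin m → ZMod (p ^ j) |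
      MvPolynomial.aeval x F = 0 ∧
      (∑ i, (c i : ZMod (p ^ j)) * x i) = 0 ∧
      ¬ (∀ i, MvPolynomial.aeval (fun t => ((x t).val : ZMod p))
          (MvPolynomial.pderiv i F) = 0) ∧
      ∃ lam : ZMod p, ∀ i, MvPolynomial.aeval (fun t => ((x t).val : ZMod p))
          (MvPolynomial.pderiv i F) = lam * (c i : ZMod p)})
    (l : ℕ) (hl : 2 ≤ l) :
    (Nat.totient (p ^ l) : ℂ) * Sc F c (p ^ l) =
      (p : ℂ) ^ (2 * l) * (B l : ℂ) - (p : ℂ) ^ (2 * l + m - 2) * (B (l - 1) : ℂ) := by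
  classical
  have : Fact p.Prime := ⟨hp⟩
  obtain ⟨j, rfl⟩ := Nat.exists_eq_add_of_le' hl
  have hB' : ∀ k, B (k + 1) = Nat.card {x : Fin m → ZMod (p ^ (k + 1)) |
      MvPolynomial.aeval x F = 0 ∧ lin c x = 0 ∧ Good F c fun i => red p k (x i)} := by
    intro k
    rw [hB]
    simp only [Good, red, ZMod.castHom_apply, ZMod.natCast_val, lin]
  have hc' : ∃ i, (c i : ZMod p) ≠ 0 := by
    simpa only [Ne, ZMod.intCast_zmod_eq_zero_iff_dvd] using hc
  rw [show j + 2 - 1 = j + 1 from rfl, show 2 * (j + 2) + m - 2 = 2 * (j + 1) + m by omega,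
    totient_mul_Sc_eq (k := j + 1) (by omega) hF c hc', pow_add _ (2 * (j + 1)) m, mul_assoc (_ ^ _)]
  congr 2
  · have hcard : B (j + 2) = (Finset.univ.filter fun x : Fin m → ZMod (p ^ (j + 1 + 1)) =>
        MvPolynomial.aeval x F = 0 ∧ lin c x = 0 ∧ Good F c fun i => red p (j + 1) (x i)).card := by
      rw [hB' (j + 1), ← Fintype.card_subtype, ← Nat.card_eq_fintype_card]
      rfl
    rw [hcard, ← Finset.sum_boole]
    refine Finset.sum_congr rfl fun x _ => ?_
    exact ite_ind_mul_ind _ _ _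
  · rw [hB' j, ← card_fibre]
    refine Finset.sum_congr rfl fun x _ => ?_
    set g := ZMod.castHom (pow_dvd_pow p (j + 1).le_succ) (ZMod (p ^ (j + 1))) with hg
    have h1 : ∀ t, red p j (g t) = red p (j + 1) t := fun t =>
      RingHom.congr_fun (Subsingleton.elim ((red p j).comp g) (red p (j + 1))) t
    have h2 : lin c (fun i => g (x i)) = g (lin c x) := by simp [lin]
    simp only [h1, h2, aeval_comp_ringHom]
    simp only [hg, castHom_eq_zero_iff]
    exact ite_ind_mul_ind _ _ _
end
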